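/- arXiv:1505.07068 — 5 statements merged into one kernel-verified Lean document; each statement's English description precedes it below -/
import Mathlib

section
/- Let C ⊆ k be fields of characteristic zero and let 𝔥 be a finite-dimensional Lie algebra over C whose adjoint module is semisimple, i.e. every ideal of 𝔥 admits a complementary ideal (equivalently, 𝔥 is a direct sum of simple ideals together with an abelian part decomposing into lines — the Lie-algebra condition implied by 𝔥 being the Lie algebra of a reductive algebraic group over C). Let 𝔤 be a C-Lie subalgebra of the base-changed Lie algebra k ⊗_C 𝔥 (with bracket ⁅a⊗ξ, b⊗η⁆ = ab ⊗ [ξ,η]) containing all elements 1 ⊗ ξ for ξ ∈ 𝔥. Let W be a finite-dimensional k-vector space, ρ : 𝔤 → End_k(W) a C-linear map satisfying ρ(⁅m₁,m₂⁆) = ρ(m₁)∘ρ(m₂) − ρ(m₂)∘ρ(m₁), and let V ⊆ W be a k-subspace with dim_k(W/V) = 1 such that ρ(m)(W) ⊆ V for every m ∈ 𝔤 (so V is a 𝔤-submodule and W/V carries the trivial action). Assume: (1) there exists w₀ ∈ W ∖ V with ρ(1⊗ξ)(w₀) = 0 for all ξ ∈ 𝔥; and (2) there is no nonzero C-linear map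 μ : 𝔥 → V with μ([ξ,η]) = ρ(1⊗ξ)(μ(η)) for all ξ, η ∈ 𝔥 (equivalently, there is no nonzero k-linear (k⊗_C 𝔥)-equivariant map k⊗_C 𝔥 → V). Then there exists w ∈ W ∖ V with ρ(m)(w) = 0 for every m ∈ 𝔤. -/
open scoped TensorProduct

/-- The algebra of endomorphisms generated by the adjoint action. -/
abbrev AdAlg (C 𝔥 : Type*) [Field C] [LieRing 𝔥] [LieAlgebra C 𝔥] :
    Subalgebra C (Module.End C 𝔥) :=
  Algebra.adjoin C (Set.range fun x : 𝔥 => (LieAlgebra.ad C 𝔥 x : Module.End C 𝔥))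

/-- The generator of `AdAlg` given by `x`. -/
def adGen (C : Type*) {𝔥 : Type*} [Field C] [LieRing 𝔥] [LieAlgebra C 𝔥] (x : 𝔥) :
    AdAlg C 𝔥 :=
  ⟨LieAlgebra.ad C 𝔥 x, Algebra.subset_adjoin ⟨x, rfl⟩⟩

theorem adGen_smul (C : Type*) {𝔥 : Type*} [Field C] [LieRing 𝔥] [LieAlgebra C 𝔥] (x y : 𝔥) :
    adGen C x • y = ⁅x, y⁆ := rfl

theorem adAlg_stable {C 𝔥 M : Type*} [Field C] [LieRing 𝔥] [LieAlgebra C 𝔥]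
    [AddCommGroup M] [Module C M] [Module (AdAlg C 𝔥) M] [IsScalarTower C (AdAlg C 𝔥) M]
    (N : Submodule C M) (hN : ∀ (x : 𝔥) (m : M), m ∈ N → adGen C x • m ∈ N)
    (a : AdAlg C 𝔥) : ∀ m ∈ N, a • m ∈ N := by
  obtain ⟨a, ha⟩ := a
  induction ha using Algebra.adjoin_induction with
  | mem x hx =>
    obtain ⟨y, rfl⟩ := hx
    exact fun m hm => hN y m hm
  | algebraMap r =>
    intro m hm
    have : (⟨algebraMap C _ r, Subalgebra.algebraMap_mem _ r⟩ : AdAlg C 𝔥) • m = r • m :=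
      algebraMap_smul (AdAlg C 𝔥) r m
    rw [this]
    exact N.smul_mem r hm
  | add x y hx hy ihx ihy =>
    intro m hm
    have : (⟨x + y, add_mem hx hy⟩ : AdAlg C 𝔥) • m
        = (⟨x, hx⟩ : AdAlg C 𝔥) • m + (⟨y, hy⟩ : AdAlg C 𝔥) • m :=
      add_smul (⟨x, hx⟩ : AdAlg C 𝔥) (⟨y, hy⟩ : AdAlg C 𝔥) m
    rw [this]
    exact N.add_mem (ihx m hm) (ihy m hm)
  | mul x y hx hy ihx ihy =>
    intro m hm
    have : (⟨x * y, mul_mem hx hy⟩ : AdAlg C 𝔥) • m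
        = (⟨x, hx⟩ : AdAlg C 𝔥) • (⟨y, hy⟩ : AdAlg C 𝔥) • m :=
      mul_smul (⟨x, hx⟩ : AdAlg C 𝔥) (⟨y, hy⟩ : AdAlg C 𝔥) m
    rw [this]
    exact ihx _ (ihy m hm)

theorem adAlg_semisimple {C 𝔥 : Type*} [Field C] [LieRing 𝔥] [LieAlgebra C 𝔥]
    (hss : ∀ I : LieIdeal C 𝔥, ∃ J : LieIdeal C 𝔥, IsCompl I J) :
    IsSemisimpleModule (AdAlg C 𝔥) 𝔥 := by
  rw [isSemisimpleModule_iff]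
  refine ⟨fun N => ?_⟩
  let I : LieIdeal C 𝔥 :=
    { N.restrictScalars C with
      lie_mem := fun {x m} hm => N.smul_mem (adGen C x) hm }
  obtain ⟨J, hJ⟩ := hss I
  let J' : Submodule (AdAlg C 𝔥) 𝔥 :=
    { J.toSubmodule with
      smul_mem' := fun a m hm => adAlg_stable J.toSubmodule
        (fun x m hm => J.lie_mem hm) a m hm }
  have hJ1 := LieSubmodule.isCompl_toSubmodule.mpr hJ
  refine ⟨J', ?_⟩
  constructor
  · rw [Submodule.disjoint_def]
    intro x hx hx'
    exact (Submodule.disjoint_def.mp hJ1.disjoint) x hx hx'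
  · rw [codisjoint_iff, eq_top_iff]
    intro x _
    have hx : x ∈ I.toSubmodule ⊔ J.toSubmodule := by rw [hJ1.sup_eq_top]; trivial
    obtain ⟨y, hy, z, hz, rfl⟩ := Submodule.mem_sup.mp hx
    exact Submodule.add_mem_sup hy hz

theorem exists_proj_aux {C 𝔥 M : Type*} [Field C] [LieRing 𝔥] [LieAlgebra C 𝔥]
    [AddCommGroup M] [Module C M] [Module (AdAlg C 𝔥) M] [IsScalarTower C (AdAlg C 𝔥) M]
    [IsSemisimpleModule (AdAlg C 𝔥) M]
    (N₀ : Submodule C M) (hN : ∀ (x : 𝔥) (m : M), m ∈ N₀ → adGen C x • m ∈ N₀) :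
    ∃ P : M →ₗ[C] M, (∀ m, P m ∈ N₀) ∧ (∀ m ∈ N₀, P m = m) ∧
      ∀ (x : 𝔥) (m : M), P (adGen C x • m) = adGen C x • P m := by
  let N : Submodule (AdAlg C 𝔥) M :=
    { N₀ with smul_mem' := fun a m hm => adAlg_stable N₀ hN a m hm }
  obtain ⟨Q, hQ⟩ := exists_isCompl N
  let P : M →ₗ[AdAlg C 𝔥] N := N.projectionOnto Q hQ
  let P' : M →ₗ[AdAlg C 𝔥] M := N.subtype ∘ₗ P
  refine ⟨P'.restrictScalars C, fun m => (P m).2, fun m hm => ?_, fun x m => ?_⟩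
  · exact congrArg Subtype.val (Submodule.projectionOnto_apply_left hQ ⟨m, hm⟩)
  · exact P'.map_smul (adGen C x) m

theorem exists_equiv_aux.{u, v, w} (C : Type u) (k : Type v) (𝔥 : Type w) [Field C] [Field k] [Algebra C k]
    [LieRing 𝔥] [LieAlgebra C 𝔥] :
    ∃ (ι : Type v) (e : (k ⊗[C] 𝔥) ≃ₗ[C] (ι →₀ 𝔥)),
      ∀ (ξ : 𝔥) (x : k ⊗[C] 𝔥), e ⁅(1 : k) ⊗ₜ[C] ξ, x⁆ = adGen C ξ • e x := by
  classical
  refine ⟨_, TensorProduct.equivFinsuppOfBasisLeft (N := 𝔥) (Module.Basis.ofVectorSpace C k), ?_⟩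
  intro ξ x
  induction x using TensorProduct.induction_on with
  | zero => simp
  | add x y hx hy => rw [lie_add, map_add, map_add, smul_add, hx, hy]
  | tmul a η =>
    rw [LieAlgebra.ExtendScalars.bracket_tmul, one_mul]
    ext i
    rw [Finsupp.smul_apply, TensorProduct.equivFinsuppOfBasisLeft_apply_tmul_apply,
      TensorProduct.equivFinsuppOfBasisLeft_apply_tmul_apply, adGen_smul, lie_smul]

theorem exists_F_aux {C k 𝔥 : Type*} [Field C] [Field k] [Algebra C k]
    [LieRing 𝔥] [LieAlgebra C 𝔥]
    (hss : ∀ I : LieIdeal C 𝔥, ∃ J : LieIdeal C 𝔥, IsCompl I J)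
    (𝔤 : Submodule C (k ⊗[C] 𝔥))
    (hcl : ∀ x y : k ⊗[C] 𝔥, x ∈ 𝔤 → y ∈ 𝔤 → ⁅x, y⁆ ∈ 𝔤)
    (h1 : ∀ ξ : 𝔥, (1 : k) ⊗ₜ[C] ξ ∈ 𝔤) :
    ∃ F : (k ⊗[C] 𝔥) →ₗ[C] 𝔤, (∀ m : 𝔤, F m = m) ∧
      ∀ (ξ : 𝔥) (x : k ⊗[C] 𝔥), F ⁅(1 : k) ⊗ₜ[C] ξ, x⁆
        = ⟨⁅(1 : k) ⊗ₜ[C] ξ, (F x : k ⊗[C] 𝔥)⁆, hcl _ _ (h1 ξ) (F x).2⟩ := by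
  have := adAlg_semisimple hss
  obtain ⟨ι, e, he⟩ := exists_equiv_aux C k 𝔥
  obtain ⟨P, hP1, hP2, hP3⟩ := exists_proj_aux (𝔥 := 𝔥) (𝔤.map e.toLinearMap) (by
    rintro x _ ⟨m, hm, rfl⟩
    exact ⟨⁅(1 : k) ⊗ₜ[C] x, m⁆, hcl _ _ (h1 x) hm, he x m⟩)
  have hmem : ∀ x, (e.symm.toLinearMap ∘ₗ P ∘ₗ e.toLinearMap) x ∈ 𝔤 := by
    intro x
    obtain ⟨m, hm, hm'⟩ := hP1 (e x)
    have h : e m = P (e x) := hm'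
    change e.symm (P (e x)) ∈ 𝔤
    rw [← h, e.symm_apply_apply]
    exact hm
  refine ⟨LinearMap.codRestrict 𝔤 _ hmem, fun m => Subtype.ext ?_, fun ξ x => Subtype.ext ?_⟩
  · change e.symm (P (e m)) = m
    rw [hP2 (e m) ⟨m, m.2, rfl⟩, e.symm_apply_apply]
  · change e.symm (P (e _)) = ⁅(1 : k) ⊗ₜ[C] ξ, e.symm (P (e x))⁆
    apply e.injective
    rw [he, he, hP3, e.apply_symm_apply, e.apply_symm_apply]

/-- Lemma 4.1 of the paper. `𝔥` is a finite-dimensional Lie algebra over `C` with semisimple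
adjoint module, `𝔤` is a `C`-Lie subalgebra of `k ⊗[C] 𝔥` containing `1 ⊗ ξ` for all `ξ ∈ 𝔥`,
and `0 → V → W → 𝟙 → 0` is an exact sequence of `𝔤`-modules over `k` which splits over `𝔥`
and such that `V` contains no nonzero quotient of the adjoint module. Then the sequence
splits: there is a `𝔤`-fixed vector outside `V`. -/
theorem stmt1 {C k : Type*} [Field C] [Field k] [Algebra C k] [CharZero C] [CharZero k]
    {𝔥 : Type*} [LieRing 𝔥] [LieAlgebra C 𝔥] [FiniteDimensional C 𝔥]
    (hss : ∀ I : LieIdeal C 𝔥, ∃ J : LieIdeal C 𝔥, IsCompl I J)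
    (𝔤 : Submodule C (k ⊗[C] 𝔥))
    (hcl : ∀ x y : k ⊗[C] 𝔥, x ∈ 𝔤 → y ∈ 𝔤 → ⁅x, y⁆ ∈ 𝔤)
    (h1 : ∀ ξ : 𝔥, (1 : k) ⊗ₜ[C] ξ ∈ 𝔤)
    {W : Type*} [AddCommGroup W] [Module k W] [Module C W] [IsScalarTower C k W]
    [FiniteDimensional k W]
    (ρ : 𝔤 →ₗ[C] (W →ₗ[k] W))
    (hbracket : ∀ m₁ m₂ : 𝔤,
      ρ ⟨⁅(m₁ : k ⊗[C] 𝔥), (m₂ : k ⊗[C] 𝔥)⁆, hcl _ _ m₁.2 m₂.2⟩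
        = ρ m₁ ∘ₗ ρ m₂ - ρ m₂ ∘ₗ ρ m₁)
    (V : Submodule k W)
    (hcodim : Module.finrank k (W ⧸ V) = 1)
    (hmapsV : ∀ (m : 𝔤) (w : W), ρ m w ∈ V)
    (hsplit𝔥 : ∃ w₀ : W, w₀ ∉ V ∧ ∀ ξ : 𝔥, ρ ⟨(1 : k) ⊗ₜ[C] ξ, h1 ξ⟩ w₀ = 0)
    (hnoadj : ∀ μ : 𝔥 →ₗ[C] W, (∀ ξ : 𝔥, μ ξ ∈ V) →
      (∀ ξ η : 𝔥, μ ⁅ξ, η⁆ = ρ ⟨(1 : k) ⊗ₜ[C] ξ, h1 ξ⟩ (μ η)) → μ = 0) :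
    ∃ w : W, w ∉ V ∧ ∀ m : 𝔤, ρ m w = 0 := by
  obtain ⟨w₀, hw₀, hfix⟩ := hsplit𝔥
  refine ⟨w₀, hw₀, ?_⟩
  obtain ⟨F, hF, hFe⟩ := exists_F_aux hss 𝔤 hcl h1
  let φ : 𝔤 →ₗ[C] W :=
    { toFun := fun m => ρ m w₀
      map_add' := fun x y => by rw [map_add, LinearMap.add_apply]
      map_smul' := fun r x => by rw [map_smul, LinearMap.smul_apply, RingHom.id_apply] }
  have hφ : ∀ (a : k) (ξ : 𝔥), φ (F (a ⊗ₜ[C] ξ)) = 0 := by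
    intro a
    have h0 := hnoadj ((φ ∘ₗ F) ∘ₗ TensorProduct.mk C k 𝔥 a) (fun ξ => hmapsV _ _) (by
      intro ξ η
      have h2 : a ⊗ₜ[C] ⁅ξ, η⁆ = ⁅(1 : k) ⊗ₜ[C] ξ, a ⊗ₜ[C] η⁆ := by
        rw [LieAlgebra.ExtendScalars.bracket_tmul, one_mul]
      change ρ (F (a ⊗ₜ[C] ⁅ξ, η⁆)) w₀ = ρ _ (ρ (F (a ⊗ₜ[C] η)) w₀)
      have h3 := hbracket ⟨_, h1 ξ⟩ (F (a ⊗ₜ[C] η))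
      rw [h2, hFe, h3, LinearMap.sub_apply, LinearMap.comp_apply, LinearMap.comp_apply, hfix,
        map_zero, sub_zero])
    exact fun ξ => LinearMap.congr_fun h0 ξ
  have hφ' : ∀ x : k ⊗[C] 𝔥, φ (F x) = 0 := by
    intro x
    induction x using TensorProduct.induction_on with
    | zero => rw [map_zero, map_zero]
    | add x y hx hy => rw [map_add, map_add, hx, hy, add_zero]
    | tmul a η => exact hφ a η
  intro m
  have h := hφ' m
  rw [hF] at h
  exact h
end

section
/- Let k be a field, let H be a group acting k-linearly and faithfully on a k-vector space U (i.e. the homomorphism H → GL(U) is injective), and let V ⊆ U be an H-invariant k-subspace such that H acts trivially on the quotient U/V and such that V contains no nonzero H-fixed vector. Then every subgroup R of H that is contained in the center of H and acts trivially on V is the trivial subgroup. -/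
/-- If a group `H` acts `k`-linearly and faithfully on `U`, `V ⊆ U` is an `H`-invariant
subspace with trivial `H`-action on `U/V` and with no nonzero `H`-fixed vector, then every
central subgroup of `H` acting trivially on `V` is trivial. -/
theorem stmt9 {k : Type*} [Field k] {H : Type*} [Group H]
    {U : Type*} [AddCommGroup U] [Module k U]
    (ρ : H →* (U ≃ₗ[k] U)) (hfaithful : Function.Injective ρ)
    (V : Submodule k U)
    (hinv : ∀ h : H, ∀ v ∈ V, ρ h v ∈ V)
    (htrivQ : ∀ (h : H) (u : U), ρ h u - u ∈ V)
    (hnofix : ∀ v ∈ V, (∀ h : H, ρ h v = v) → v = 0)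
    (R : Subgroup H) (hcentral : R ≤ Subgroup.center H)
    (htrivV : ∀ g ∈ R, ∀ v ∈ V, ρ g v = v) :
    R = ⊥ := by
  rw [Subgroup.eq_bot_iff_forall]
  intro g hg
  apply hfaithful
  rw [map_one]
  ext u
  change ρ g u = u
  rw [← sub_eq_zero]
  apply hnofix _ (htrivQ g u)
  intro h
  have hc : h * g = g * h := Subgroup.mem_center_iff.mp (hcentral hg) h
  have h1 : ρ h (ρ g u) = ρ g (ρ h u) := by
    have := congrArg (fun x => ρ x u) hc
    simpa only [map_mul, LinearEquiv.mul_apply] using this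
  have h2 := htrivV g hg _ (htrivQ h u)
  rw [map_sub] at h2
  rw [map_sub, h1, sub_eq_sub_iff_sub_eq_sub]
  exact h2
end

section
/- Let K₀/K be a finite Galois extension of fields of characteristic zero with Galois group G = Gal(K₀/K) of order r, and let ∂, δ : K₀ → K₀ be two derivations such that every σ ∈ G commutes with both: σ(∂x) = ∂(σx) and σ(δx) = δ(σx) for all x ∈ K₀. Let n ≥ 1, let A ∈ Matrix n n K₀ be a matrix each of whose entries is fixed by every σ ∈ G (so the entries of A lie in K), and suppose B ∈ Matrix n n K₀ satisfies ∂(B) − δ(A) = A·B − B·A, where derivations are applied entrywise. Set C = (1/r) · Σ_{σ ∈ G} σ(B) (entrywise). Then every entry of C is fixed by every σ ∈ G (hence lies in K), and C satisfies ∂(C) − δ(A) = A·C − C·A. -/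
open scoped Matrix

/-- The Galois average `C = (1/r) Σ_{σ ∈ Gal(K₀/K)} σ(B)` of a matrix `B` over `K₀`. -/
noncomputable def galAverage (K : Type*) {K₀ : Type*} [Field K] [Field K₀] [Algebra K K₀]
    [FiniteDimensional K K₀] {n : ℕ} (B : Matrix (Fin n) (Fin n) K₀) :
    Matrix (Fin n) (Fin n) K₀ :=
  (Fintype.card (K₀ ≃ₐ[K] K₀) : K₀)⁻¹ • ∑ τ : K₀ ≃ₐ[K] K₀, B.map ⇑τ

/-- Descent of isomonodromy along a finite Galois extension `K₀/K` in characteristic zero: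
if the entries of `A` are Galois-invariant, the derivations `∂ = D1` and `δ = D2` commute with
the Galois action, and `∂(B) − δ(A) = AB − BA` for some matrix `B` over `K₀`, then the Galois
average `C = (1/r) Σ_σ σ(B)` has Galois-invariant entries and satisfies
`∂(C) − δ(A) = AC − CA`. -/
theorem stmt10 {K K₀ : Type*} [Field K] [Field K₀] [Algebra K K₀]
    [FiniteDimensional K K₀] [IsGalois K K₀] [CharZero K₀]
    (D1 D2 : Derivation ℤ K₀ K₀)
    (hD1 : ∀ (σ : K₀ ≃ₐ[K] K₀) (x : K₀), σ (D1 x) = D1 (σ x))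
    (hD2 : ∀ (σ : K₀ ≃ₐ[K] K₀) (x : K₀), σ (D2 x) = D2 (σ x))
    {n : ℕ} (hn : 1 ≤ n)
    (A B : Matrix (Fin n) (Fin n) K₀)
    (hA : ∀ σ : K₀ ≃ₐ[K] K₀, A.map ⇑σ = A)
    (hB : B.map ⇑D1 - A.map ⇑D2 = A * B - B * A) :
    (∀ σ : K₀ ≃ₐ[K] K₀, (galAverage K B).map ⇑σ = galAverage K B) ∧
    (galAverage K B).map ⇑D1 - A.map ⇑D2 = A * galAverage K B - galAverage K B * A := by
  classical
  have hr : (Fintype.card (K₀ ≃ₐ[K] K₀) : K₀) ≠ 0 :=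
    Nat.cast_ne_zero.mpr Fintype.card_ne_zero
  have hC : ∀ i j, galAverage K B i j =
      (Fintype.card (K₀ ≃ₐ[K] K₀) : K₀)⁻¹ * ∑ τ : K₀ ≃ₐ[K] K₀, τ (B i j) := by
    intro i j
    simp [galAverage, Matrix.sum_apply]
  refine ⟨?_, ?_⟩
  · intro σ
    ext i j
    rw [Matrix.map_apply, hC, map_mul, map_inv₀, map_natCast, map_sum]
    congr 1
    exact Fintype.sum_equiv (Equiv.mulLeft σ) _ _ (fun τ => rfl)
  · have key : ∀ τ : K₀ ≃ₐ[K] K₀,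
        (B.map ⇑τ).map ⇑D1 = A.map ⇑D2 + (A * B.map ⇑τ - B.map ⇑τ * A) := by
      intro τ
      have hτA : ∀ i j, τ (A i j) = A i j := fun i j => congrFun (congrFun (hA τ) i) j
      ext i j
      have h := congrArg τ (congrFun (congrFun hB i) j)
      simp only [Matrix.sub_apply, Matrix.map_apply, Matrix.mul_apply, map_sub, map_sum,
        map_mul, hD1, hD2, hτA] at h
      simp only [Matrix.add_apply, Matrix.sub_apply, Matrix.map_apply, Matrix.mul_apply]
      rw [← h]
      ring
    have hD : (galAverage K B).map ⇑D1 = (Fintype.card (K₀ ≃ₐ[K] K₀) : K₀)⁻¹ •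
        ∑ τ : K₀ ≃ₐ[K] K₀, (B.map ⇑τ).map ⇑D1 := by
      ext i j
      rw [Matrix.map_apply, hC, Derivation.leibniz, Derivation.leibniz_inv,
        Derivation.map_natCast, map_sum]
      simp [Matrix.sum_apply]
    rw [hD, Finset.sum_congr rfl (fun τ _ => key τ), Finset.sum_add_distrib,
      Finset.sum_sub_distrib, ← Finset.mul_sum, ← Finset.sum_mul, Finset.sum_const,
      Finset.card_univ, smul_add, smul_sub, ← Nat.cast_smul_eq_nsmul K₀, smul_smul,
      inv_mul_cancel₀ hr, one_smul, galAverage, Matrix.mul_smul, Matrix.smul_mul]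
    abel
end

section
/- Let k be a field of characteristic zero and let α ∈ k be an element such that α² ≠ (m : k)² for every integer m (for example, α transcendental over the prime field). Let a : ℤ → k be a finitely supported function that is not identically zero, and define b : ℤ → k by b(j) = (j² − α²)·a(j) + a(j − 2), where j² denotes the image of the integer j² in k. Then b is nonzero at at least two distinct integers. Consequently, if g = Σ_j a(j) x^j is a nonzero Laurent polynomial over k and L(y) = y'' + (1/x)·y' + (1 − α²/x²)·y, then L(g) (whose coefficient of x^{j−2} is b(j)) is not a monomial; in particular L(g) ≠ x^{μ−1} for any integer μ, so the Lommel equation L(y) = x^{μ−1} has no Laurent-polynomial solution. -/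
/-- If `α² ≠ m²` for every integer `m` and `a : ℤ → k` is a finitely supported nonzero
function, then `b(j) = (j² − α²)·a(j) + a(j − 2)` is nonzero at two distinct integers.
(This is the coefficient computation showing the Lommel equation
`y'' + y'/x + (1 − α²/x²) y = x^(μ−1)` has no Laurent-polynomial solution.) -/
theorem stmt11 {k : Type*} [Field k] [CharZero k]
    (α : k) (hα : ∀ m : ℤ, α ^ 2 ≠ (m : k) ^ 2)
    (a : ℤ →₀ k) (ha : a ≠ 0) :
    ∃ j₁ j₂ : ℤ, j₁ ≠ j₂ ∧
      ((j₁ : k) ^ 2 - α ^ 2) * a j₁ + a (j₁ - 2) ≠ 0 ∧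
      ((j₂ : k) ^ 2 - α ^ 2) * a j₂ + a (j₂ - 2) ≠ 0 := by
  have hne : a.support.Nonempty := Finsupp.support_nonempty_iff.mpr ha
  have hmin := Finset.min'_mem a.support hne
  have hmax := Finset.max'_mem a.support hne
  have hle := Finset.min'_le a.support _ hmax
  have h1 : a (a.support.min' hne - 2) = 0 := by
    by_contra h
    have := Finset.min'_le a.support _ (Finsupp.mem_support_iff.mpr h)
    omega
  have h2 : a (a.support.max' hne + 2) = 0 := by
    by_contra h
    have := Finset.le_max' a.support _ (Finsupp.mem_support_iff.mpr h)
    omega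
  refine ⟨a.support.min' hne, a.support.max' hne + 2, by omega, ?_, ?_⟩
  · rw [h1, add_zero]
    exact mul_ne_zero (sub_ne_zero.mpr (hα _).symm) (Finsupp.mem_support_iff.mp hmin)
  · rw [h2, mul_zero, zero_add, add_sub_cancel_right]
    exact Finsupp.mem_support_iff.mp hmax
end

section
/- Let R be a commutative ring and let d₁, d₂ : R → R be derivations that commute: d₁(d₂(x)) = d₂(d₁(x)) for all x ∈ R. For a square matrix M over R write dᵢ(M) for the entrywise application of dᵢ. Suppose U is an invertible n×n matrix over R and A, B are n×n matrices over R satisfying d₁(U) = A·U and d₂(U) = B·U. Then d₁(B) − d₂(A) = A·B − B·A. -/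
theorem map_deriv_mul_aux {R : Type*} [CommRing R] (d : Derivation ℤ R R) {n : ℕ}
    (M N : Matrix (Fin n) (Fin n) R) :
    (M * N).map ⇑d = M.map ⇑d * N + M * N.map ⇑d := by
  ext i j
  simp only [Matrix.map_apply, Matrix.mul_apply, Matrix.add_apply, map_sum, Derivation.leibniz,
    smul_eq_mul, ← Finset.sum_add_distrib]
  refine Finset.sum_congr rfl fun k _ => ?_
  ring

/-- If `d₁, d₂` are commuting derivations of a commutative ring `R` and `U` is an invertible
matrix with `d₁(U) = A·U` and `d₂(U) = B·U`, then the integrability condition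
`d₁(B) − d₂(A) = A·B − B·A` holds. -/
theorem stmt12 {R : Type*} [CommRing R]
    (d₁ d₂ : Derivation ℤ R R) (hcomm : ∀ x : R, d₁ (d₂ x) = d₂ (d₁ x))
    {n : ℕ} (U A B : Matrix (Fin n) (Fin n) R) (hU : IsUnit U)
    (h₁ : U.map ⇑d₁ = A * U) (h₂ : U.map ⇑d₂ = B * U) :
    B.map ⇑d₁ - A.map ⇑d₂ = A * B - B * A := by
  have h : (U.map ⇑d₂).map ⇑d₁ = (U.map ⇑d₁).map ⇑d₂ := by
    ext i j
    exact hcomm (U i j)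
  rw [h₁, h₂, map_deriv_mul_aux, map_deriv_mul_aux, h₁, h₂] at h
  apply hU.mul_right_cancel
  rw [sub_mul, sub_mul, sub_eq_sub_iff_add_eq_add, mul_assoc A, mul_assoc B, h, add_comm]
end
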